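/- Let x(t) = Σ_{k=1}^K A_k(t) e^{2πi φ_k(t)} belong to the class 𝒟_{ε₁,ε₂} and let g, σ, Ṽ_x, Ṽ^{g₃}_x, Ṽ^{g'}_x be as in the context. For w ∈ {g, g'} set rem^w(t,η) = Ṽ^w_x(t,η) − Σ_{ℓ=1}^K x_ℓ(t) ŵ(σ(t)(η−φ'_ℓ(t))). Define the complex phase transformation ω^{adp,c}_x(t,η) = ∂_t Ṽ_x(t,η)/(2πi Ṽ_x(t,η)) + σ'(t)/(2πi σ(t)) + (σ'(t)/σ(t)) Ṽ^{g₃}_x(t,η)/(2πi Ṽ_x(t,η)). Then for every (t,η) with Ṽ_x(t,η) ≠ 0 and every k ∈ {1,…,K}, ω^{adp,c}_x(t,η) − φ'_k(t) = Rem₁/(2πi Ṽ_x(t,η)), where Rem₁ = 2πi (η − φ'_k(t)) rem^g(t,η) − rem^{g'}(t,η)/σ(t) + 2πi Σ_{ℓ≠k} x_ℓ(t) (φ'_ℓ(t) − φ'_k(t)) ĝ(σ(t)(η−φ'_ℓ(t))). -/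

import Mathlib

/-! The substitution `u = t + τ` gives `Ṽ^w_x(t,η) = ∫ x(u) σ(t)⁻¹ w((u-t)/σ(t)) e^{-2πiη(u-t)} du`,
in which `t` enters only through the window, the scale and the modulation. Since `x` is bounded and
continuous and the windows `g`, `g'`, `u g'(u)` decay quadratically, differentiation under the
integral sign (`adSTFT_hasDerivAt`) yields
`∂_t Ṽ = (2πiη - σ'/σ) Ṽ - Ṽ^{g'}/σ - (σ'/σ) Ṽ^{g₃}`.
The `σ'` terms in `ω^{adp,c}` are exactly the ones cancelling here, so that
`ω^{adp,c} = (2πiη Ṽ - Ṽ^{g'}/σ) / (2πi Ṽ)`. Substituting `Ṽ^w = rem^w + ∑ x_ℓ ŵ(σ(η - φ'_ℓ))` for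
`w = g, g'` and using `(g')^(ξ) = 2πiξ ĝ(ξ)` (`ft_deriv`) gives the claim; the term `ℓ = k` carries
the factor `φ'_ℓ - φ'_k = 0`. -/

open MeasureTheory Real Set Filter
open scoped Topology Real

noncomputable section

/-- `e2πi θ = exp(2πiθ)`. -/
def e2πi (θ : ℝ) : ℂ := Complex.exp (2 * (π : ℂ) * (θ : ℂ) * Complex.I)

/-- Fourier transform with the convention `ŵ(ξ) = ∫ w(u) e^{-2πiξu} du`. -/
def ft (w : ℝ → ℂ) (ξ : ℝ) : ℂ := ∫ u : ℝ, w u * e2πi (-(ξ * u))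

/-- The adaptive STFT with window `w` and time-varying parameter `σ`. -/
def adSTFT (σ : ℝ → ℝ) (w : ℝ → ℂ) (x : ℝ → ℂ) (t η : ℝ) : ℂ :=
  ∫ τ : ℝ, x (t + τ) * ((σ t : ℂ))⁻¹ * w (τ / σ t) * e2πi (-(η * τ))

/-- Absolute moments `I_n = ∫ |τ^n w(τ)| dτ`. -/
def absMom (w : ℝ → ℂ) (n : ℕ) : ℝ := ∫ τ : ℝ, |τ| ^ n * ‖w τ‖

/-- The window `g₁(u) = u g(u)`. -/
def g1w (g : ℝ → ℂ) : ℝ → ℂ := fun u => (u : ℂ) * g u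

/-- The window `g₂(u) = u² g(u)`. -/
def g2w (g : ℝ → ℂ) : ℝ → ℂ := fun u => (u : ℂ) ^ 2 * g u

/-- The window `g₃(u) = u g'(u)`. -/
def g3w (g : ℝ → ℂ) : ℝ → ℂ := fun u => (u : ℂ) * deriv g u

/-- `∂_t` of the adaptive STFT. -/
def adSTFTt (σ : ℝ → ℝ) (w : ℝ → ℂ) (x : ℝ → ℂ) (t η : ℝ) : ℂ :=
  deriv (fun s => adSTFT σ w x s η) t

/-- `∂_η` of the adaptive STFT. -/
def adSTFTη (σ : ℝ → ℝ) (w : ℝ → ℂ) (x : ℝ → ℂ) (t η : ℝ) : ℂ :=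
  deriv (fun η' => adSTFT σ w x t η') η

/-- The complex phase transformation `ω^{adp,c}` of the adaptive FSST. -/
def omegaC (σ : ℝ → ℝ) (g x : ℝ → ℂ) (t η : ℝ) : ℂ :=
  adSTFTt σ g x t η / (2 * (π : ℂ) * Complex.I * adSTFT σ g x t η)
  + ((deriv σ t : ℝ) : ℂ) / (2 * (π : ℂ) * Complex.I * (σ t : ℂ))
  + ((deriv σ t / σ t : ℝ) : ℂ) * adSTFT σ (g3w g) x t η /
      (2 * (π : ℂ) * Complex.I * adSTFT σ g x t η)

/-- The (real) phase transformation `ω^{adp}` of the adaptive FSST. -/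
def omegaAdp (σ : ℝ → ℝ) (g x : ℝ → ℂ) (t η : ℝ) : ℝ :=
  (adSTFTt σ g x t η / (2 * (π : ℂ) * Complex.I * adSTFT σ g x t η)).re
  + (deriv σ t / σ t) *
      (adSTFT σ (g3w g) x t η / (2 * (π : ℂ) * Complex.I * adSTFT σ g x t η)).re

/-- The quantity `P₀(t,η)` of the second-order adaptive FSST. -/
def P0 (σ : ℝ → ℝ) (g x : ℝ → ℂ) (t η : ℝ) : ℂ :=
  (deriv (fun η' => adSTFTt σ g x t η' / adSTFT σ g x t η') η
    + ((deriv σ t / σ t : ℝ) : ℂ) *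
        deriv (fun η' => adSTFT σ (g3w g) x t η' / adSTFT σ g x t η') η)
  / deriv (fun η' => adSTFT σ (g1w g) x t η' / adSTFT σ g x t η') η

/-- The complex second-order phase transformation `ω^{adp,2nd,c}`. -/
def omega2C (σ : ℝ → ℝ) (g x : ℝ → ℂ) (t η : ℝ) : ℂ :=
  ((deriv σ t : ℝ) : ℂ) / (2 * (π : ℂ) * Complex.I * (σ t : ℂ))
  + adSTFTt σ g x t η / (2 * (π : ℂ) * Complex.I * adSTFT σ g x t η)
  - adSTFT σ (g1w g) x t η / (2 * (π : ℂ) * Complex.I * adSTFT σ g x t η) * P0 σ g x t η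
  + ((deriv σ t / σ t : ℝ) : ℂ) * adSTFT σ (g3w g) x t η /
      (2 * (π : ℂ) * Complex.I * adSTFT σ g x t η)

/-- The (real) second-order phase transformation `ω^{adp,2nd}`. -/
def omega2 (σ : ℝ → ℝ) (g x : ℝ → ℂ) (t η : ℝ) : ℝ := (omega2C σ g x t η).re

/-- The adaptive FSST `R^{adp,λ}_{x,γ}`. -/
def fsst (σ : ℝ → ℝ) (g x : ℝ → ℂ) (h : ℝ → ℝ) (γ lam t ξ : ℝ) : ℂ :=
  ∫ η in {η : ℝ | γ < ‖adSTFT σ g x t η‖},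
    adSTFT σ g x t η * ((lam⁻¹ * h ((ξ - omegaAdp σ g x t η) / lam) : ℝ) : ℂ)

/-- The second-order adaptive FSST `R^{adp,2nd,λ}_{x,γ₁,γ₂}`. -/
def fsst2 (σ : ℝ → ℝ) (g x : ℝ → ℂ) (h : ℝ → ℝ) (γ₁ γ₂ lam t ξ : ℝ) : ℂ :=
  ∫ η in {η : ℝ | γ₁ < ‖adSTFT σ g x t η‖ ∧
      γ₂ < ‖deriv (fun η' => adSTFT σ (g1w g) x t η' / adSTFT σ g x t η') η‖},
    adSTFT σ g x t η * ((lam⁻¹ * h ((ξ - omega2 σ g x t η) / lam) : ℝ) : ℂ)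

/-- The chirp kernel `G^w_ℓ(t,η)` associated with linear phase `a` and chirp rate `b`. -/
def chirpG (σ : ℝ → ℝ) (w : ℝ → ℂ) (a b : ℝ) (t η : ℝ) : ℂ :=
  ∫ τ : ℝ, e2πi (a * τ + b * τ ^ 2 / 2) * ((σ t : ℂ))⁻¹ * w (τ / σ t) * e2πi (-(η * τ))

/-- The Fourier transform of the chirped window `e^{iπru²} w(u)`. -/
def chirpFT (r : ℝ) (w : ℝ → ℂ) (ξ : ℝ) : ℂ :=
  ∫ u : ℝ, e2πi (r * u ^ 2 / 2) * w u * e2πi (-(ξ * u))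

/-- The residual `err^w(t,η) = Ṽ^w_x(t,η) - Σ_ℓ x_ℓ(t) G^w_ℓ(t,η)`. -/
def errW (σ : ℝ → ℝ) (w : ℝ → ℂ) (K : ℕ) (A φ : Fin K → ℝ → ℝ) (x : ℝ → ℂ)
    (t η : ℝ) : ℂ :=
  adSTFT σ w x t η - ∑ ℓ, (A ℓ t : ℂ) * e2πi (φ ℓ t) *
    chirpG σ w (deriv (φ ℓ) t) (deriv (deriv (φ ℓ)) t) t η

/-- The quantity `Err₁` of the second-order analysis. -/
def Err1 (σ : ℝ → ℝ) (g x : ℝ → ℂ) (K : ℕ) (A φ : Fin K → ℝ → ℝ) (k : Fin K)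
    (t η : ℝ) : ℂ :=
  2 * (π : ℂ) * Complex.I *
      (∑ ℓ ∈ Finset.univ.erase k, (A ℓ t : ℂ) * e2πi (φ ℓ t) *
        ((deriv (φ ℓ) t - deriv (φ k) t : ℝ) : ℂ) *
        chirpG σ g (deriv (φ ℓ) t) (deriv (deriv (φ ℓ)) t) t η)
  + 2 * (π : ℂ) * Complex.I * (σ t : ℂ) *
      (∑ ℓ ∈ Finset.univ.erase k, (A ℓ t : ℂ) * e2πi (φ ℓ t) *
        ((deriv (deriv (φ ℓ)) t - deriv (deriv (φ k)) t : ℝ) : ℂ) *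
        chirpG σ (g1w g) (deriv (φ ℓ) t) (deriv (deriv (φ ℓ)) t) t η)
  + 2 * (π : ℂ) * Complex.I * ((η - deriv (φ k) t : ℝ) : ℂ) * errW σ g K A φ x t η
  - errW σ (deriv g) K A φ x t η / (σ t : ℂ)
  - 2 * (π : ℂ) * Complex.I * ((deriv (deriv (φ k)) t : ℝ) : ℂ) * (σ t : ℂ) *
      errW σ (g1w g) K A φ x t η

/-- The quantity `Err₂` of the second-order analysis. -/
def Err2 (σ : ℝ → ℝ) (g x : ℝ → ℂ) (K : ℕ) (A φ : Fin K → ℝ → ℝ) (k : Fin K)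
    (t η : ℝ) : ℂ :=
  4 * (π : ℂ) ^ 2 * (σ t : ℂ) *
      (∑ ℓ ∈ Finset.univ.erase k, (A ℓ t : ℂ) * e2πi (φ ℓ t) *
        ((deriv (φ ℓ) t - deriv (φ k) t : ℝ) : ℂ) *
        chirpG σ (g1w g) (deriv (φ ℓ) t) (deriv (deriv (φ ℓ)) t) t η)
  + 4 * (π : ℂ) ^ 2 * (σ t : ℂ) ^ 2 *
      (∑ ℓ ∈ Finset.univ.erase k, (A ℓ t : ℂ) * e2πi (φ ℓ t) *
        ((deriv (deriv (φ ℓ)) t - deriv (deriv (φ k)) t : ℝ) : ℂ) *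
        chirpG σ (g2w g) (deriv (φ ℓ) t) (deriv (deriv (φ ℓ)) t) t η)
  + 2 * (π : ℂ) * Complex.I * errW σ g K A φ x t η
  + 4 * (π : ℂ) ^ 2 * ((η - deriv (φ k) t : ℝ) : ℂ) * (σ t : ℂ) * errW σ (g1w g) K A φ x t η
  + 2 * (π : ℂ) * Complex.I * errW σ (g3w g) K A φ x t η
  - 4 * (π : ℂ) ^ 2 * ((deriv (deriv (φ k)) t : ℝ) : ℂ) * (σ t : ℂ) ^ 2 *
      errW σ (g2w g) K A φ x t η

/-- The quantity `Err₃` of the second-order analysis. -/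
def Err3 (σ : ℝ → ℝ) (g x : ℝ → ℂ) (K : ℕ) (A φ : Fin K → ℝ → ℝ) (k : Fin K)
    (t η : ℝ) : ℂ :=
  (adSTFT σ g x t η * Err2 σ g x K A φ k t η
    - adSTFTη σ g x t η * Err1 σ g x K A φ k t η)
  / (adSTFT σ g x t η * adSTFTη σ (g1w g) x t η
    - adSTFT σ (g1w g) x t η * adSTFTη σ g x t η)

lemma norm_e2πi (θ : ℝ) : ‖e2πi θ‖ = 1 := by
  have h : (2 * (π : ℂ) * (θ : ℂ) * Complex.I) = ((2 * π * θ : ℝ) : ℂ) * Complex.I := by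
    push_cast; ring
  rw [e2πi, h, Complex.norm_exp_ofReal_mul_I]

lemma continuous_e2πi : Continuous e2πi := by
  unfold e2πi
  fun_prop

lemma e2πi_hasDerivAt (θ : ℝ) : HasDerivAt e2πi (2 * (π : ℂ) * Complex.I * e2πi θ) θ := by
  have h1 : HasDerivAt (fun θ : ℝ => 2 * (π : ℂ) * (θ : ℂ) * Complex.I)
      (2 * (π : ℂ) * 1 * Complex.I) θ :=
    ((Complex.ofRealCLM.hasDerivAt (x := θ)).const_mul (2 * (π : ℂ))).mul_const Complex.I
  refine h1.cexp.congr_deriv ?_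
  rw [e2πi]
  ring

lemma deriv_schwartz (g : SchwartzMap ℝ ℂ) :
    deriv (⇑g) = ⇑(SchwartzMap.derivCLM ℝ ℂ g) := by
  ext v
  simp

lemma ft_eq_fourier (w : ℝ → ℂ) : ft w = FourierTransform.fourier w := by
  ext ξ
  rw [Real.fourier_real_eq_integral_exp_smul, ft]
  congr 1
  ext u
  rw [smul_eq_mul, mul_comm, e2πi]
  congr 2
  push_cast
  ring

lemma ft_deriv (g : SchwartzMap ℝ ℂ) (ξ : ℝ) :
    ft (deriv (⇑g)) ξ = 2 * (π : ℂ) * Complex.I * (ξ : ℂ) * ft (⇑g) ξ := by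
  rw [ft_eq_fourier, ft_eq_fourier, Real.fourier_deriv g.integrable g.differentiable
    (by rw [deriv_schwartz]; exact SchwartzMap.integrable _)]
  simp

/-- Window functions to which the dominated convergence argument applies: continuous, with
`‖w v‖ = O((1 + v²)⁻¹)`. -/
def QuadDecay (w : ℝ → ℂ) : Prop :=
  Continuous w ∧ ∃ C, 0 ≤ C ∧ ∀ v : ℝ, (1 + v ^ 2) * ‖w v‖ ≤ C

lemma schwartz_pow_bound (g : SchwartzMap ℝ ℂ) (k : ℕ) :
    ∃ C, ∀ v : ℝ, |v| ^ k * ‖g v‖ ≤ C := by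
  obtain ⟨C, -, hC⟩ := g.decay k 0
  exact ⟨C, fun v => by simpa using hC v⟩

lemma quadDecay_schwartz (g : SchwartzMap ℝ ℂ) : QuadDecay g := by
  obtain ⟨C, hC⟩ := schwartz_pow_bound g 0
  obtain ⟨D, hD⟩ := schwartz_pow_bound g 2
  have key : ∀ v : ℝ, (1 + v ^ 2) * ‖g v‖ ≤ C + D := fun v => by
    have h1 := hC v
    have h2 := hD v
    rw [sq_abs] at h2
    linarith
  exact ⟨g.continuous, C + D, (by positivity : 0 ≤ (1 + (0:ℝ) ^ 2) * ‖g 0‖).trans (key 0), key⟩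

lemma quadDecay_g3w (g : SchwartzMap ℝ ℂ) : QuadDecay (g3w g) := by
  unfold g3w
  rw [deriv_schwartz]
  set h := SchwartzMap.derivCLM ℝ ℂ g
  obtain ⟨C, hC⟩ := schwartz_pow_bound h 1
  obtain ⟨D, hD⟩ := schwartz_pow_bound h 3
  have key : ∀ v : ℝ, (1 + v ^ 2) * ‖(v : ℂ) * h v‖ ≤ C + D := fun v => by
    have h1 := hC v
    have h2 := hD v
    rw [norm_mul, Complex.norm_real, Real.norm_eq_abs]
    calc (1 + v ^ 2) * (|v| * ‖h v‖) = |v| ^ 1 * ‖h v‖ + |v| ^ 3 * ‖h v‖ := by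
          rw [← sq_abs v]; ring
      _ ≤ C + D := by linarith
  refine ⟨?_, C + D, (by positivity : 0 ≤ (1 + (0:ℝ) ^ 2) * ‖((0:ℝ) : ℂ) * h 0‖).trans (key 0), key⟩
  have := h.continuous
  fun_prop

/-- The integrand of `adSTFT σ w x s η` after the substitution `u = s + τ`. -/
def kern (σ : ℝ → ℝ) (w x : ℝ → ℂ) (η s u : ℝ) : ℂ :=
  x u * ((σ s : ℂ))⁻¹ * w ((u - s) / σ s) * e2πi (-(η * (u - s)))

lemma adSTFT_eq_kern (σ : ℝ → ℝ) (w x : ℝ → ℂ) (s η : ℝ) :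
    adSTFT σ w x s η = ∫ u, kern σ w x η s u := by
  rw [adSTFT, ← integral_add_left_eq_self (fun u => kern σ w x η s u) s]
  simp [kern]

lemma exists_local_bound (f : ℝ → ℝ) (hf : Continuous f) (t : ℝ) :
    ∃ M, ∀ s ∈ Metric.closedBall t 1, |f s| ≤ M := by
  obtain ⟨M, hM⟩ := (isCompact_closedBall t (1:ℝ)).exists_bound_of_continuousOn hf.continuousOn
  exact ⟨M, fun s hs => hM s hs⟩

lemma kern_continuous {σ : ℝ → ℝ} {w x : ℝ → ℂ} (hx : Continuous x) (hw : Continuous w)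
    (η s : ℝ) : Continuous (kern σ w x η s) := by
  unfold kern
  have := continuous_e2πi
  fun_prop

/-- A domination of the integrand which is uniform for the time parameter within distance `1`
of `t`. -/
lemma kern_bound {σ : ℝ → ℝ} {w x : ℝ → ℂ} {X : ℝ} (hX : ∀ u, ‖x u‖ ≤ X)
    (hw : QuadDecay w) (hσ : Continuous σ) (hσpos : ∀ s, 0 < σ s) (η t : ℝ) :
    ∃ B, 0 ≤ B ∧ ∀ s ∈ Metric.closedBall t 1, ∀ u,
      ‖kern σ w x η s u‖ ≤ B * (1 + (u - t) ^ 2)⁻¹ := by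
  obtain ⟨-, C, hC0, hC⟩ := hw
  obtain ⟨M₁, hM₁⟩ := exists_local_bound σ hσ t
  obtain ⟨N, hN⟩ := exists_local_bound (fun s => (σ s)⁻¹)
    (hσ.inv₀ fun s => (hσpos s).ne') t
  have hX0 : 0 ≤ X := (norm_nonneg _).trans (hX 0)
  have hN0 : 0 ≤ N := (abs_nonneg _).trans (hN t (by simp))
  obtain ⟨M, hM1, hM⟩ : ∃ M, 1 ≤ M ∧ ∀ s ∈ Metric.closedBall t 1, σ s ≤ M :=
    ⟨max 1 M₁, le_max_left _ _, fun s hs =>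
      (le_abs_self _).trans ((hM₁ s hs).trans (le_max_right _ _))⟩
  refine ⟨X * N * (C * (3 * M ^ 2)), by positivity, fun s hs u => ?_⟩
  set v := (u - s) / σ s with hv
  -- `|u - t| ≤ |u - s| + 1` and `|u - s| = σ(s)|v| ≤ M|v|` compare the two quadratic weights.
  have hweight : 1 + (u - t) ^ 2 ≤ 3 * M ^ 2 * (1 + v ^ 2) := by
    have hus : u - s = v * σ s := by rw [hv]; field_simp [(hσpos s).ne']
    have h1 : (u - s) ^ 2 ≤ M ^ 2 * v ^ 2 := by
      rw [hus, mul_pow, mul_comm]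
      gcongr
      · exact (hσpos s).le
      · exact hM s hs
    have h2 : (s - t) ^ 2 ≤ 1 := by
      rw [Metric.mem_closedBall, Real.dist_eq] at hs
      rw [← sq_abs]
      nlinarith [abs_nonneg (s - t)]
    have h3 : (1:ℝ) ≤ M ^ 2 := by nlinarith
    have h4 : (u - t) ^ 2 ≤ 2 * (u - s) ^ 2 + 2 * (s - t) ^ 2 := by
      nlinarith [sq_nonneg ((u - s) - (s - t))]
    nlinarith [mul_nonneg (sq_nonneg M) (sq_nonneg v)]
  have hwv : ‖w v‖ ≤ C * (3 * M ^ 2) * (1 + (u - t) ^ 2)⁻¹ := by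
    rw [← div_eq_mul_inv, le_div_iff₀ (by positivity)]
    calc ‖w v‖ * (1 + (u - t) ^ 2) ≤ ‖w v‖ * (3 * M ^ 2 * (1 + v ^ 2)) := by gcongr
      _ = (1 + v ^ 2) * ‖w v‖ * (3 * M ^ 2) := by ring
      _ ≤ C * (3 * M ^ 2) := by gcongr; exact hC v
  have hinv : ‖((σ s : ℂ))⁻¹‖ ≤ N := by
    rw [← Complex.ofReal_inv, Complex.norm_real]
    exact hN s hs
  calc ‖kern σ w x η s u‖ = ‖x u‖ * ‖((σ s : ℂ))⁻¹‖ * ‖w v‖ := by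
        rw [kern, norm_mul, norm_mul, norm_mul, norm_e2πi, mul_one]
    _ ≤ X * N * (C * (3 * M ^ 2) * (1 + (u - t) ^ 2)⁻¹) := by
        gcongr
        exact hX u
    _ = _ := by ring

lemma integrable_weight (B t : ℝ) : Integrable fun u : ℝ => B * (1 + (u - t) ^ 2)⁻¹ :=
  (integrable_inv_one_add_sq.comp_sub_right t).const_mul B

lemma kern_integrable {σ : ℝ → ℝ} {w x : ℝ → ℂ} {X : ℝ} (hxc : Continuous x)
    (hX : ∀ u, ‖x u‖ ≤ X) (hw : QuadDecay w) (hσ : Continuous σ) (hσpos : ∀ s, 0 < σ s)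
    (η t : ℝ) : Integrable (kern σ w x η t) := by
  obtain ⟨B, -, hB⟩ := kern_bound hX hw hσ hσpos η t
  exact (integrable_weight B t).mono' (kern_continuous hxc hw.1 η t).aestronglyMeasurable
    (Eventually.of_forall fun u => hB t (by simp) u)

lemma kern_hasDerivAt {σ : ℝ → ℝ} (hσ : ContDiff ℝ 1 σ) (hσpos : ∀ s, 0 < σ s)
    (g : SchwartzMap ℝ ℂ) (x : ℝ → ℂ) (η s u : ℝ) :
    HasDerivAt (fun s => kern σ g x η s u)
      ((2 * (π : ℂ) * Complex.I * η - ((deriv σ s / σ s : ℝ) : ℂ)) * kern σ g x η s u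
        - (((σ s)⁻¹ : ℝ) : ℂ) * kern σ (deriv g) x η s u
        - ((deriv σ s / σ s : ℝ) : ℂ) * kern σ (g3w g) x η s u) s := by
  have hne : σ s ≠ 0 := (hσpos s).ne'
  have hneC : (σ s : ℂ) ≠ 0 := by exact_mod_cast hne
  have hd : HasDerivAt σ (deriv σ s) s := (hσ.differentiable (by simp) s).hasDerivAt
  have h1 : HasDerivAt (fun s => ((σ s : ℂ))⁻¹) (-((deriv σ s : ℝ) : ℂ) / (σ s : ℂ) ^ 2) s :=
    hd.ofReal_comp.inv hneC
  have hsub : HasDerivAt (fun s => u - s) (-1) s := by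
    simpa using (hasDerivAt_id s).const_sub u
  have h2 := (g.differentiable ((u - s) / σ s)).hasDerivAt.scomp s (hsub.div hd hne)
  have h3 := (e2πi_hasDerivAt (-(η * (u - s)))).scomp s ((hsub.const_mul η).neg)
  refine (((h1.const_mul (x u)).mul h2).mul h3).congr_deriv ?_
  simp only [kern, g3w, Function.comp, Complex.real_smul, Pi.mul_apply, Pi.neg_apply, Pi.div_apply]
  push_cast
  field_simp
  ring

lemma adSTFT_hasDerivAt {σ : ℝ → ℝ} (hσ : ContDiff ℝ 1 σ) (hσpos : ∀ s, 0 < σ s)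
    (g : SchwartzMap ℝ ℂ) {x : ℝ → ℂ} {X : ℝ} (hxc : Continuous x) (hX : ∀ u, ‖x u‖ ≤ X)
    (t η : ℝ) :
    HasDerivAt (fun s => adSTFT σ g x s η)
      ((2 * (π : ℂ) * Complex.I * η - ((deriv σ t / σ t : ℝ) : ℂ)) * adSTFT σ g x t η
        - (((σ t)⁻¹ : ℝ) : ℂ) * adSTFT σ (deriv g) x t η
        - ((deriv σ t / σ t : ℝ) : ℂ) * adSTFT σ (g3w g) x t η) t := by
  have hσc := hσ.continuous
  have hg := quadDecay_schwartz g
  have hg' : QuadDecay (deriv g) := by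
    rw [deriv_schwartz]; exact quadDecay_schwartz _
  have hg3 := quadDecay_g3w g
  have hi0 := kern_integrable hxc hX hg hσc hσpos η t
  have hi1 := kern_integrable hxc hX hg' hσc hσpos η t
  have hi3 := kern_integrable hxc hX hg3 hσc hσpos η t
  obtain ⟨B0, hB00, hB0⟩ := kern_bound hX hg hσc hσpos η t
  obtain ⟨B1, hB10, hB1⟩ := kern_bound hX hg' hσc hσpos η t
  obtain ⟨B3, hB30, hB3⟩ := kern_bound hX hg3 hσc hσpos η t
  obtain ⟨R, hR⟩ := exists_local_bound (fun s => deriv σ s / σ s)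
    ((hσ.continuous_deriv le_rfl).div hσc fun s => (hσpos s).ne') t
  obtain ⟨N, hN⟩ := exists_local_bound (fun s => (σ s)⁻¹)
    (hσc.inv₀ fun s => (hσpos s).ne') t
  have hR0 : 0 ≤ R := (abs_nonneg _).trans (hR t (by simp))
  have hN0 : 0 ≤ N := (abs_nonneg _).trans (hN t (by simp))
  set a : ℂ := 2 * (π : ℂ) * Complex.I * η with ha
  have hmain := (hasDerivAt_integral_of_dominated_loc_of_deriv_le
    (μ := volume) (F := fun s u => kern σ g x η s u)
    (F' := fun s u => (a - ((deriv σ s / σ s : ℝ) : ℂ)) * kern σ g x η s u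
        - (((σ s)⁻¹ : ℝ) : ℂ) * kern σ (deriv g) x η s u
        - ((deriv σ s / σ s : ℝ) : ℂ) * kern σ (g3w g) x η s u)
    (bound := fun u => ((‖a‖ + R) * B0 + N * B1 + R * B3) * (1 + (u - t) ^ 2)⁻¹)
    (Metric.closedBall_mem_nhds t one_pos)
    (Eventually.of_forall fun s => (kern_continuous hxc hg.1 η s).aestronglyMeasurable)
    hi0
    (((hi0.const_mul _).sub (hi1.const_mul _)).sub (hi3.const_mul _)).aestronglyMeasurable
    (Eventually.of_forall fun u s hs => ?_)
    (integrable_weight _ t)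
    (Eventually.of_forall fun u s _ => kern_hasDerivAt hσ hσpos g x η s u)).2
  · simp only [← adSTFT_eq_kern] at hmain
    refine hmain.congr_deriv ?_
    rw [integral_sub (f := fun u => _ - _) ((hi0.const_mul _).sub (hi1.const_mul _))
      (hi3.const_mul _), integral_sub (hi0.const_mul _) (hi1.const_mul _), integral_const_mul, integral_const_mul,
      integral_const_mul, ← adSTFT_eq_kern, ← adSTFT_eq_kern, ← adSTFT_eq_kern]
  · have k0 := hB0 s hs u
    have k1 := hB1 s hs u
    have k3 := hB3 s hs u
    have hr : ‖((deriv σ s / σ s : ℝ) : ℂ)‖ ≤ R := by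
      rw [Complex.norm_real]; exact hR s hs
    have hn : ‖(((σ s)⁻¹ : ℝ) : ℂ)‖ ≤ N := by
      rw [Complex.norm_real]; exact hN s hs
    have hQ : 0 ≤ (1 + (u - t) ^ 2)⁻¹ := by positivity
    calc _ ≤ ‖a - ((deriv σ s / σ s : ℝ) : ℂ)‖ * ‖kern σ g x η s u‖
          + ‖(((σ s)⁻¹ : ℝ) : ℂ)‖ * ‖kern σ (deriv g) x η s u‖
          + ‖((deriv σ s / σ s : ℝ) : ℂ)‖ * ‖kern σ (g3w g) x η s u‖ := by
          rw [← norm_mul, ← norm_mul, ← norm_mul]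
          exact (norm_sub_le _ _).trans (by gcongr; exact norm_sub_le _ _)
      _ ≤ (‖a‖ + R) * (B0 * (1 + (u - t) ^ 2)⁻¹) + N * (B1 * (1 + (u - t) ^ 2)⁻¹)
          + R * (B3 * (1 + (u - t) ^ 2)⁻¹) := by
          gcongr
          exact (norm_sub_le _ _).trans (by gcongr)
      _ = _ := by ring

theorem statement1
    (K : ℕ) (hK : 0 < K)
    (A φ : Fin K → ℝ → ℝ) (ε₁ ε₂ : ℝ) (hε₁ : 0 < ε₁) (hε₂pos : 0 < ε₂)
    (hA1 : ∀ k, ContDiff ℝ 1 (A k))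
    (hAbdd : ∀ k, ∃ C, ∀ s, |A k s| ≤ C)
    (hφ2 : ∀ k, ContDiff ℝ 2 (φ k))
    (hApos : ∀ k s, 0 < A k s)
    (hφ'bd : ∀ k, ∃ c C : ℝ, 0 < c ∧ (∀ s, c ≤ deriv (φ k) s) ∧ ∀ s, deriv (φ k) s ≤ C)
    (hA' : ∀ k s, |deriv (A k) s| ≤ ε₁)
    (hφ'' : ∀ k s, |deriv (deriv (φ k)) s| ≤ ε₂)
    (hsep : ∃ d, 0 < d ∧ ∀ (j : ℕ) (hj : j + 1 < K) (s : ℝ),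
      d ≤ deriv (φ ⟨j + 1, hj⟩) s - deriv (φ ⟨j, Nat.lt_of_succ_lt hj⟩) s)
    (g : SchwartzMap ℝ ℂ) (hg0 : g 0 ≠ 0)
    (σ : ℝ → ℝ) (hσ : ContDiff ℝ 1 σ) (hσpos : ∀ s, 0 < σ s)
    (x : ℝ → ℂ) (hx : ∀ s, x s = ∑ k, (A k s : ℂ) * e2πi (φ k s))
    (remg remg' : ℝ → ℝ → ℂ)
    (hremg : ∀ t η, remg t η = adSTFT σ (⇑g) x t η -
      ∑ ℓ, (A ℓ t : ℂ) * e2πi (φ ℓ t) * ft (⇑g) (σ t * (η - deriv (φ ℓ) t)))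
    (hremg' : ∀ t η, remg' t η = adSTFT σ (deriv (⇑g)) x t η -
      ∑ ℓ, (A ℓ t : ℂ) * e2πi (φ ℓ t) * ft (deriv (⇑g)) (σ t * (η - deriv (φ ℓ) t))) :
    ∀ (t η : ℝ), adSTFT σ (⇑g) x t η ≠ 0 → ∀ k : Fin K,
      omegaC σ (⇑g) x t η - ((deriv (φ k) t : ℝ) : ℂ) =
        (2 * (π : ℂ) * Complex.I * ((η - deriv (φ k) t : ℝ) : ℂ) * remg t η
          - remg' t η / (σ t : ℂ)
          + 2 * (π : ℂ) * Complex.I *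
              ∑ ℓ ∈ Finset.univ.erase k, (A ℓ t : ℂ) * e2πi (φ ℓ t) *
                ((deriv (φ ℓ) t - deriv (φ k) t : ℝ) : ℂ) *
                ft (⇑g) (σ t * (η - deriv (φ ℓ) t)))
        / (2 * (π : ℂ) * Complex.I * adSTFT σ (⇑g) x t η) := by
  intro t η hV k
  have hxc : Continuous x := by
    rw [funext hx]
    refine continuous_finsetSum _ fun l _ => ?_
    exact (Complex.continuous_ofReal.comp (hA1 l).continuous).mul
      (continuous_e2πi.comp (hφ2 l).continuous)
  obtain ⟨X, hX⟩ : ∃ X, ∀ u, ‖x u‖ ≤ X := by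
    choose C hC using hAbdd
    refine ⟨∑ l, C l, fun u => ?_⟩
    rw [hx u]
    refine norm_sum_le_of_le _ fun l _ => ?_
    rw [norm_mul, norm_e2πi, mul_one, Complex.norm_real]
    exact hC l u
  have hd : adSTFTt σ g x t η = _ := (adSTFT_hasDerivAt hσ hσpos g hxc hX t η).deriv
  have hσ0 : (σ t : ℂ) ≠ 0 := by exact_mod_cast (hσpos t).ne'
  have hpi : (π : ℂ) ≠ 0 := by exact_mod_cast Real.pi_ne_zero
  have hω : omegaC σ g x t η - ((deriv (φ k) t : ℝ) : ℂ) =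
      (2 * (π : ℂ) * Complex.I * ((η - deriv (φ k) t : ℝ) : ℂ) * adSTFT σ g x t η
        - adSTFT σ (deriv g) x t η / (σ t : ℂ)) / (2 * (π : ℂ) * Complex.I * adSTFT σ g x t η) := by
    rw [omegaC, hd]
    push_cast
    field_simp [Complex.I_ne_zero]
    ring
  rw [hω, hremg, hremg']
  congr 1
  -- The omitted index `ℓ = k` contributes zero, so the sum may be taken over all indices.
  have herase : ∑ ℓ ∈ Finset.univ.erase k, (A ℓ t : ℂ) * e2πi (φ ℓ t) *
        ((deriv (φ ℓ) t - deriv (φ k) t : ℝ) : ℂ) * ft (⇑g) (σ t * (η - deriv (φ ℓ) t)) =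
      ∑ ℓ, (A ℓ t : ℂ) * e2πi (φ ℓ t) *
        ((deriv (φ ℓ) t - deriv (φ k) t : ℝ) : ℂ) * ft (⇑g) (σ t * (η - deriv (φ ℓ) t)) :=
    Finset.sum_erase _ (by simp)
  have hsum : 2 * (π : ℂ) * Complex.I * ((η - deriv (φ k) t : ℝ) : ℂ) *
        (∑ ℓ, (A ℓ t : ℂ) * e2πi (φ ℓ t) * ft (⇑g) (σ t * (η - deriv (φ ℓ) t)))
      - (∑ ℓ, (A ℓ t : ℂ) * e2πi (φ ℓ t) *
          ft (deriv (⇑g)) (σ t * (η - deriv (φ ℓ) t))) / (σ t : ℂ) =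
      2 * (π : ℂ) * Complex.I * ∑ ℓ, (A ℓ t : ℂ) * e2πi (φ ℓ t) *
        ((deriv (φ ℓ) t - deriv (φ k) t : ℝ) : ℂ) * ft (⇑g) (σ t * (η - deriv (φ ℓ) t)) := by
    rw [Finset.mul_sum, Finset.sum_div, Finset.mul_sum, ← Finset.sum_sub_distrib]
    refine Finset.sum_congr rfl fun l _ => ?_
    rw [ft_deriv]
    push_cast
    field_simp
    ring
  rw [herase, ← hsum]
  ring

end
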